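/- Suppose the joint distribution of (S, W, U_1,…,U_K, Y) is invariant under every permutation of the indices {1,…,K} applied simultaneously to the U-coordinates. Then min over nonempty subsets A ⊆ {1,…,K} of (1/|A|)·I(U_A; Y, U_{K∖A} | S, W) equals (1/K)·I(U_{1..K}; Y | S, W). -/

import Mathlib

open scoped BigOperators Classical

/-- Shannon entropy (base 2) of a p.m.f. on a finite alphabet. -/
noncomputable def ent {α : Type*} [Fintype α] (p : α → ℝ) : ℝ :=
  -∑ a, p a * Real.logb 2 (p a)

/-- Distribution (pushforward p.m.f.) of a random variable `X` under `μ`. -/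
noncomputable def pushf {Ω α : Type*} [Fintype Ω] (μ : Ω → ℝ) (X : Ω → α) : α → ℝ :=
  fun a => ∑ ω ∈ Finset.univ.filter (fun ω => X ω = a), μ ω

/-- Shannon entropy of a random variable. -/
noncomputable def entRV {Ω α : Type*} [Fintype Ω] [Fintype α] (μ : Ω → ℝ) (X : Ω → α) : ℝ :=
  ent (pushf μ X)

/-- Conditional entropy `H(X|Z)`. -/
noncomputable def centRV {Ω α β : Type*} [Fintype Ω] [Fintype α] [Fintype β]
    (μ : Ω → ℝ) (X : Ω → α) (Z : Ω → β) : ℝ :=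
  entRV μ (fun ω => (X ω, Z ω)) - entRV μ Z

/-- Mutual information `I(X;Y)`. -/
noncomputable def mi {Ω α β : Type*} [Fintype Ω] [Fintype α] [Fintype β]
    (μ : Ω → ℝ) (X : Ω → α) (Y : Ω → β) : ℝ :=
  entRV μ X + entRV μ Y - entRV μ (fun ω => (X ω, Y ω))

/-- Conditional mutual information `I(X;Y|Z)`. -/
noncomputable def cmi {Ω α β γ : Type*} [Fintype Ω] [Fintype α] [Fintype β] [Fintype γ]
    (μ : Ω → ℝ) (X : Ω → α) (Y : Ω → β) (Z : Ω → γ) : ℝ :=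
  centRV μ X Z + centRV μ Y Z - centRV μ (fun ω => (X ω, Y ω)) Z

/-- Kullback–Leibler divergence (base 2). -/
noncomputable def kl {α : Type*} [Fintype α] (p q : α → ℝ) : ℝ :=
  ∑ a, p a * Real.logb 2 (p a / q a)

/-- `μ` is a probability mass function. -/
def IsPMF {Ω : Type*} [Fintype Ω] (μ : Ω → ℝ) : Prop :=
  (∀ ω, 0 ≤ μ ω) ∧ ∑ ω, μ ω = 1

/-- Probability of the atom of `X` containing `ω`. -/
noncomputable def atomP {Ω α : Type*} [Fintype Ω] (μ : Ω → ℝ) (X : Ω → α) (ω : Ω) : ℝ :=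
  ∑ ω' ∈ Finset.univ.filter (fun ω' => X ω' = X ω), μ ω'

lemma sum_pushf_mul {Ω α : Type*} [Fintype Ω] [Fintype α] (μ : Ω → ℝ) (X : Ω → α) (φ : α → ℝ) :
    ∑ a, pushf μ X a * φ a = ∑ ω, μ ω * φ (X ω) := by
  rw [← Finset.sum_fiberwise Finset.univ X (fun ω => μ ω * φ (X ω))]
  refine Finset.sum_congr rfl fun a _ => ?_
  rw [pushf, Finset.sum_mul]
  refine Finset.sum_congr (by congr) fun ω hω => ?_
  rw [(Finset.mem_filter.1 hω).2]

lemma entRV_eq {Ω α : Type*} [Fintype Ω] [Fintype α] (μ : Ω → ℝ) (X : Ω → α) :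
    entRV μ X = -∑ ω, μ ω * Real.logb 2 (atomP μ X ω) := by
  unfold entRV ent
  rw [sum_pushf_mul μ X (fun a => Real.logb 2 (pushf μ X a))]
  rfl

lemma entRV_congr {Ω α β : Type*} [Fintype Ω] [Fintype α] [Fintype β] (μ : Ω → ℝ)
    (X : Ω → α) (X' : Ω → β) (h : ∀ ω ω', X ω = X ω' ↔ X' ω = X' ω') :
    entRV μ X = entRV μ X' := by
  rw [entRV_eq, entRV_eq]
  simp only [atomP, h]

lemma pushf_comp {Ω α β : Type*} [Fintype Ω] [Fintype α] (μ : Ω → ℝ)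
    (X : Ω → α) (g : α → β) (b : β) :
    pushf μ (fun ω => g (X ω)) b = ∑ a, pushf μ X a * (if g a = b then 1 else 0) := by
  rw [sum_pushf_mul]
  simp [pushf, Finset.sum_filter]

lemma pushf_comp_congr {Ω α β : Type*} [Fintype Ω] [Fintype α] (μ : Ω → ℝ)
    (X X' : Ω → α) (g : α → β) (h : pushf μ X = pushf μ X') :
    pushf μ (fun ω => g (X ω)) = pushf μ (fun ω => g (X' ω)) := by
  funext b
  rw [pushf_comp, pushf_comp, h]

lemma pushf_nonneg {Ω α : Type*} [Fintype Ω] (μ : Ω → ℝ) (hμ : ∀ ω, 0 ≤ μ ω) (X : Ω → α) (a : α) :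
    0 ≤ pushf μ X a := Finset.sum_nonneg fun ω _ => hμ ω

lemma le_atomP {Ω α : Type*} [Fintype Ω] (μ : Ω → ℝ) (hμ : ∀ ω, 0 ≤ μ ω) (X : Ω → α) (ω : Ω) :
    μ ω ≤ atomP μ X ω :=
  Finset.single_le_sum (f := μ) (fun i _ => hμ i) (by simp)

lemma sum_pushf_fst {Ω α γ : Type*} [Fintype Ω] [Fintype α] (μ : Ω → ℝ)
    (X : Ω → α) (Z : Ω → γ) (c : γ) :
    ∑ a, pushf μ (fun ω => (X ω, Z ω)) (a, c) = pushf μ Z c := by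
  simp only [pushf, Finset.sum_filter]
  rw [Finset.sum_comm]
  refine Finset.sum_congr rfl fun ω _ => ?_
  by_cases h : Z ω = c <;> simp [h]

lemma sum_pushf_le {Ω α : Type*} [Fintype Ω] [Fintype α] (μ : Ω → ℝ) (X : Ω → α) :
    ∑ a, pushf μ X a = ∑ ω, μ ω := by
  simpa using sum_pushf_mul μ X (fun _ => 1)

lemma entRV_submod {Ω α β γ : Type*} [Fintype Ω] [Fintype α] [Fintype β] [Fintype γ]
    (μ : Ω → ℝ) (hμ : IsPMF μ) (X : Ω → α) (Y : Ω → β) (Z : Ω → γ) :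
    entRV μ (fun ω => (X ω, Y ω, Z ω)) + entRV μ Z ≤
      entRV μ (fun ω => (X ω, Z ω)) + entRV μ (fun ω => (Y ω, Z ω)) := by
  obtain ⟨h0, h1⟩ := hμ
  set q := pushf μ (fun ω => (X ω, Y ω, Z ω)) with hq
  set r := pushf μ (fun ω => (X ω, Z ω)) with hr
  set s := pushf μ (fun ω => (Y ω, Z ω)) with hs
  set t := pushf μ Z with ht
  have hr0 : ∀ a, 0 ≤ r a := pushf_nonneg μ h0 _
  have hs0 : ∀ a, 0 ≤ s a := pushf_nonneg μ h0 _
  have ht0 : ∀ a, 0 ≤ t a := pushf_nonneg μ h0 _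
  have hq0 : ∀ a, 0 ≤ q a := pushf_nonneg μ h0 _
  have key : ∑ ω, μ ω * (r (X ω, Z ω) * s (Y ω, Z ω) / (q (X ω, Y ω, Z ω) * t (Z ω))) ≤ 1 := by
    have e := sum_pushf_mul μ (fun ω => (X ω, Y ω, Z ω))
      (fun p => r (p.1, p.2.2) * s (p.2.1, p.2.2) / (q p * t p.2.2))
    simp only at e
    rw [← e, ← hq]
    calc _ ≤ ∑ p : α × β × γ, r (p.1, p.2.2) * s (p.2.1, p.2.2) / t p.2.2 := by
          refine Finset.sum_le_sum fun p _ => ?_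
          have hn : 0 ≤ r (p.1, p.2.2) * s (p.2.1, p.2.2) / t p.2.2 :=
            div_nonneg (mul_nonneg (hr0 _) (hs0 _)) (ht0 _)
          rcases (hq0 p).eq_or_lt with h | h
          · rw [← h]; simpa using hn
          · apply le_of_eq
            rw [mul_div_assoc', mul_div_mul_left _ _ h.ne']
      _ = ∑ c, ∑ a, ∑ b, r (a, c) * s (b, c) / t c := by
          rw [Fintype.sum_prod_type]
          simp only [Fintype.sum_prod_type]
          simp_rw [Finset.sum_comm (s := (Finset.univ : Finset β)) (t := (Finset.univ : Finset γ))]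
          rw [Finset.sum_comm]
      _ = ∑ c, t c := by
          refine Finset.sum_congr rfl fun c _ => ?_
          have e1 : ∑ a, r (a, c) = t c := sum_pushf_fst μ X Z c
          have e2 : ∑ b, s (b, c) = t c := sum_pushf_fst μ Y Z c
          simp_rw [← Finset.sum_div, ← Finset.mul_sum, e2, ← Finset.sum_mul, e1]
          by_cases h : t c = 0
          · simp [h]
          · field_simp
      _ = 1 := by rw [sum_pushf_le, h1]
      _ ≤ 1 := le_rfl
  have hl : 0 < Real.log 2 := Real.log_pos (by norm_num)
  have pt : ∀ ω, μ ω * (Real.log (r (X ω, Z ω)) + Real.log (s (Y ω, Z ω))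
      - Real.log (q (X ω, Y ω, Z ω)) - Real.log (t (Z ω))) ≤
      μ ω * (r (X ω, Z ω) * s (Y ω, Z ω) / (q (X ω, Y ω, Z ω) * t (Z ω))) - μ ω := by
    intro ω
    rcases (h0 ω).eq_or_lt with h | h
    · simp [← h]
    · have p1 : 0 < r (X ω, Z ω) := h.trans_le (le_atomP μ h0 (fun ω => (X ω, Z ω)) ω)
      have p2 : 0 < s (Y ω, Z ω) := h.trans_le (le_atomP μ h0 (fun ω => (Y ω, Z ω)) ω)
      have p3 : 0 < q (X ω, Y ω, Z ω) := h.trans_le (le_atomP μ h0 (fun ω => (X ω, Y ω, Z ω)) ω)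
      have p4 : 0 < t (Z ω) := h.trans_le (le_atomP μ h0 Z ω)
      have := Real.log_le_sub_one_of_pos (div_pos (mul_pos p1 p2) (mul_pos p3 p4))
      rw [Real.log_div (by positivity) (by positivity), Real.log_mul p1.ne' p2.ne',
        Real.log_mul p3.ne' p4.ne'] at this
      nlinarith
  have tot := Finset.sum_le_sum (s := Finset.univ) fun ω _ => pt ω
  rw [Finset.sum_sub_distrib, h1] at tot
  have tot' : ∑ ω, μ ω * (Real.log (r (X ω, Z ω)) + Real.log (s (Y ω, Z ω))
      - Real.log (q (X ω, Y ω, Z ω)) - Real.log (t (Z ω))) ≤ 0 := by linarith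
  have conv : ∀ {τ : Type _} (p : Ω → ℝ), ∑ ω, μ ω * Real.logb 2 (p ω) =
      (∑ ω, μ ω * Real.log (p ω)) / Real.log 2 := by
    intro _ p
    rw [Finset.sum_div]
    exact Finset.sum_congr rfl fun ω _ => by rw [Real.logb, mul_div_assoc]
  simp only [entRV_eq]
  rw [conv (τ := Unit), conv (τ := Unit), conv (τ := Unit), conv (τ := Unit)]
  simp only [mul_add, mul_sub, Finset.sum_add_distrib, Finset.sum_sub_distrib] at tot'
  have fin := div_nonpos_of_nonpos_of_nonneg tot' hl.le
  rw [sub_div, sub_div, add_div] at fin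
  have c1 : (fun ω => atomP μ (fun ω => (X ω, Z ω)) ω) = fun ω => r (X ω, Z ω) := rfl
  have c2 : (fun ω => atomP μ (fun ω => (Y ω, Z ω)) ω) = fun ω => s (Y ω, Z ω) := rfl
  have c3 : (fun ω => atomP μ (fun ω => (X ω, Y ω, Z ω)) ω) = fun ω => q (X ω, Y ω, Z ω) := rfl
  have c4 : (fun ω => atomP μ Z ω) = fun ω => t (Z ω) := rfl
  simp only [funext_iff] at c1 c2 c3 c4
  simp only [c1, c2, c3, c4]
  linarith

/-- A discretely concave sequence lies above its chord. -/
lemma chord_le (K : ℕ) (f : ℕ → ℝ) (hf : ∀ m, m + 2 ≤ K → f (m + 2) + f m ≤ 2 * f (m + 1))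
    (a : ℕ) (ha : a ≤ K) : (a : ℝ) * f K + ((K : ℝ) - a) * f 0 ≤ K * f a := by
  induction K with
  | zero => obtain rfl : a = 0 := by omega
            simp
  | succ n ih =>
    -- the last increment is at most the average
    have step : ∀ m, m + 1 ≤ n + 1 → (m : ℝ) * (f (m + 1) - f m) ≤ f m - f 0 := by
      intro m
      induction m with
      | zero => intro _; simp
      | succ m ihm =>
        intro hm
        have h1 := ihm (by omega)
        have h2 := hf m (by omega)
        push_cast
        have : (m : ℝ) * (f (m + 1 + 1) - f (m + 1)) ≤ m * (f (m + 1) - f m) :=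
          mul_le_mul_of_nonneg_left (by linarith) (Nat.cast_nonneg m)
        linarith
    rcases Nat.lt_or_ge n a with h | h
    · obtain rfl : a = n + 1 := by omega
      simp
    · have h1 := ih (fun m hm => hf m (by omega)) h
      have h2 := step n le_rfl
      rcases Nat.eq_zero_or_pos n with h0 | h0
      · subst h0
        obtain rfl : a = 0 := by omega
        simp
      · have hn : (0 : ℝ) < n := by exact_mod_cast h0
        push_cast
        have ha0 : (0 : ℝ) ≤ a := Nat.cast_nonneg a
        have h3 := mul_le_mul_of_nonneg_left h2 ha0
        have h4 := mul_le_mul_of_nonneg_left h1 (by linarith : (0 : ℝ) ≤ n + 1)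
        refine le_of_mul_le_mul_left ?_ hn
        linarith

/-- Joint entropy of `U_T` and `V`. -/
noncomputable def jent {Ω α β : Type*} [Fintype Ω] [Fintype α] [Fintype β] (μ : Ω → ℝ) {K : ℕ}
    (U : Fin K → Ω → α) (V : Ω → β) (T : Finset (Fin K)) : ℝ :=
  entRV μ (fun ω => ((fun a : {i : Fin K // i ∈ T} => U a.1 ω), V ω))

lemma jent_eq {Ω α β ε : Type*} [Fintype Ω] [Fintype α] [Fintype β] [Fintype ε] (μ : Ω → ℝ) {K : ℕ}
    (U : Fin K → Ω → α) (V : Ω → β) (T : Finset (Fin K)) (X : Ω → ε)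
    (h : ∀ ω ω', X ω = X ω' ↔ (∀ i ∈ T, U i ω = U i ω') ∧ V ω = V ω') :
    entRV μ X = jent μ U V T := by
  refine entRV_congr _ _ _ fun ω ω' => ?_
  rw [h]
  simp [funext_iff]

lemma jent_card {Ω α β : Type*} [Fintype Ω] [Fintype α] [Fintype β] (μ : Ω → ℝ) {K : ℕ}
    (U : Fin K → Ω → α) (V : Ω → β)
    (hex : ∀ σ : Equiv.Perm (Fin K), pushf μ (fun ω => ((fun i => U (σ i) ω), V ω)) =
      pushf μ (fun ω => ((fun i => U i ω), V ω)))
    (T T' : Finset (Fin K)) (h : T.card = T'.card) : jent μ U V T = jent μ U V T' := by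
  let e : {i // i ∈ T} ≃ {i // i ∈ T'} := Finset.equivOfCardEq h
  let σ : Equiv.Perm (Fin K) := e.extendSubtype
  have hσ : ∀ i, i ∈ T ↔ σ i ∈ T' := fun i => by
    constructor
    · exact fun hi => e.extendSubtype_mem i hi
    · intro hi
      by_contra hc
      exact e.extendSubtype_not_mem i hc hi
  have e1 := pushf_comp_congr μ _ _
    (fun p : (Fin K → α) × β => ((fun a : {i : Fin K // i ∈ T} => p.1 a.1), p.2)) (hex σ)
  have e2 : jent μ U V T =
      entRV μ (fun ω => ((fun a : {i : Fin K // i ∈ T} => U (σ a.1) ω), V ω)) := by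
    unfold jent entRV
    exact congrArg ent e1.symm
  rw [e2]
  refine jent_eq μ U V T' _ fun ω ω' => ?_
  simp only [Prod.mk.injEq, funext_iff, Subtype.forall]
  refine and_congr_left fun _ => ⟨fun H i hi => ?_, fun H i hi => H _ ((hσ i).1 hi)⟩
  have := H (σ.symm i) ((hσ _).2 (by simpa using hi))
  simpa using this

lemma jent_chord {Ω α β : Type*} [Fintype Ω] [Fintype α] [Fintype β] (μ : Ω → ℝ) (hμ : IsPMF μ)
    {K : ℕ} (U : Fin K → Ω → α) (V : Ω → β)
    (hex : ∀ σ : Equiv.Perm (Fin K), pushf μ (fun ω => ((fun i => U (σ i) ω), V ω)) =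
      pushf μ (fun ω => ((fun i => U i ω), V ω)))
    (T : Finset (Fin K)) :
    (T.card : ℝ) * jent μ U V Finset.univ + ((K : ℝ) - T.card) * jent μ U V ∅ ≤
      K * jent μ U V T := by
  let I : ℕ → Finset (Fin K) := fun m => Finset.univ.filter (fun i => i.1 < m)
  have hcard : ∀ m, m ≤ K → (I m).card = m := by
    intro m hm
    simp [I, Fin.card_filter_val_lt, hm]
  have hc := chord_le K (fun m => jent μ U V (I m)) (by
    intro m hm
    let x : Fin K := ⟨m, by omega⟩
    let y : Fin K := ⟨m + 1, by omega⟩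
    have hx : x ∉ I m := by simp [I, x]
    have hy : y ∉ I m := by simp [I, y]
    have hxy : x ∉ insert y (I m) := by simp [I, x, y]
    have s := entRV_submod μ hμ (U x) (U y)
      (fun ω => ((fun a : {i : Fin K // i ∈ I m} => U a.1 ω), V ω))
    rw [jent_eq μ U V (insert x (insert y (I m))) _ (by
        intro ω ω'; simp [funext_iff, and_assoc]),
      jent_eq μ U V (I m) _ (by intro ω ω'; simp [funext_iff]),
      jent_eq μ U V (insert x (I m)) _ (by intro ω ω'; simp [funext_iff, and_assoc]),
      jent_eq μ U V (insert y (I m)) _ (by intro ω ω'; simp [funext_iff, and_assoc]),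
      jent_card μ U V hex (insert x (insert y (I m))) (I (m + 2)) (by
        rw [Finset.card_insert_of_notMem hxy, Finset.card_insert_of_notMem hy,
          hcard _ hm, hcard _ (by omega)]),
      jent_card μ U V hex (insert x (I m)) (I (m + 1)) (by
        rw [Finset.card_insert_of_notMem hx, hcard _ (by omega), hcard _ (by omega)]),
      jent_card μ U V hex (insert y (I m)) (I (m + 1)) (by
        rw [Finset.card_insert_of_notMem hy, hcard _ (by omega), hcard _ (by omega)])] at s
    linarith) T.card (by simpa using T.card_le_univ)
  have hT : T.card ≤ K := by simpa using T.card_le_univ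
  rw [jent_card μ U V hex (I K) Finset.univ (by simp [hcard]),
    jent_card μ U V hex (I 0) ∅ (by simp [hcard]),
    jent_card μ U V hex (I T.card) T (hcard _ hT)] at hc
  exact hc

/-- If the joint law of `(S, W, U_1, …, U_K, Y)` is invariant under every
permutation of the `U`-indices, then the minimum over nonempty `A ⊆ {1,…,K}`
of `(1/|A|)·I(U_A; Y, U_{K∖A} | S, W)` equals `(1/K)·I(U_{1..K}; Y | S, W)`. -/
theorem min_normalized_cmi_exchangeable {Ω α β γ δ : Type*} [Fintype Ω]
    [Fintype α] [Fintype β] [Fintype γ] [Fintype δ]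
    (μ : Ω → ℝ) (hμ : IsPMF μ) {K : ℕ} (hK : 0 < K)
    (S : Ω → β) (W : Ω → γ) (Y : Ω → δ) (U : Fin K → Ω → α)
    (hexch : ∀ σ : Equiv.Perm (Fin K),
      pushf μ (fun ω => (S ω, W ω, (fun i => U (σ i) ω), Y ω)) =
        pushf μ (fun ω => (S ω, W ω, (fun i => U i ω), Y ω))) :
    IsLeast
      { x : ℝ | ∃ A : Finset (Fin K), A.Nonempty ∧
          x = (1 / (A.card : ℝ)) *
            cmi μ (fun ω => (fun a : {i : Fin K // i ∈ A} => U a.1 ω))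
              (fun ω => (Y ω, (fun a : {i : Fin K // i ∉ A} => U a.1 ω)))
              (fun ω => (S ω, W ω)) }
      ((1 / (K : ℝ)) * cmi μ (fun ω => (fun i => U i ω)) Y (fun ω => (S ω, W ω))) := by
  have hexF : ∀ σ : Equiv.Perm (Fin K),
      pushf μ (fun ω => ((fun i => U (σ i) ω), (S ω, W ω))) =
      pushf μ (fun ω => ((fun i => U i ω), (S ω, W ω))) := fun σ =>
    pushf_comp_congr μ _ _
      (fun p : β × γ × (Fin K → α) × δ => (p.2.2.1, (p.1, p.2.1))) (hexch σ)
  have hexG : ∀ σ : Equiv.Perm (Fin K),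
      pushf μ (fun ω => ((fun i => U (σ i) ω), (Y ω, S ω, W ω))) =
      pushf μ (fun ω => ((fun i => U i ω), (Y ω, S ω, W ω))) := fun σ =>
    pushf_comp_congr μ _ _
      (fun p : β × γ × (Fin K → α) × δ => (p.2.2.1, (p.2.2.2, p.1, p.2.1))) (hexch σ)
  set F := jent μ U (fun ω => (S ω, W ω)) with hF
  set G := jent μ U (fun ω => (Y ω, S ω, W ω)) with hG
  have hZ : entRV μ (fun ω => (S ω, W ω)) = F ∅ :=
    jent_eq _ _ _ _ _ (by intro ω ω'; simp)
  have hA : ∀ A : Finset (Fin K), cmi μ (fun ω => (fun a : {i : Fin K // i ∈ A} => U a.1 ω))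
              (fun ω => (Y ω, (fun a : {i : Fin K // i ∉ A} => U a.1 ω)))
              (fun ω => (S ω, W ω)) = F A + G Aᶜ - G Finset.univ - F ∅ := by
    intro A
    unfold cmi centRV
    rw [hZ, jent_eq μ U (fun ω => (S ω, W ω)) A _ (by intro ω ω'; simp [funext_iff]),
      jent_eq μ U (fun ω => (Y ω, S ω, W ω)) Aᶜ _ (by
        intro ω ω'; simp [funext_iff]; tauto),
      jent_eq μ U (fun ω => (Y ω, S ω, W ω)) Finset.univ _ (by
        intro ω ω'
        simp only [Prod.mk.injEq, funext_iff, Subtype.forall, Finset.mem_univ, true_implies]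
        constructor
        · rintro ⟨⟨h1, h2, h3⟩, h4⟩
          exact ⟨fun i => if hi : i ∈ A then h1 i hi else h3 i hi, h2, h4⟩
        · rintro ⟨h1, h2, h4⟩
          exact ⟨⟨fun i _ => h1 i, h2, fun i _ => h1 i⟩, h4⟩)]
    ring
  have hU : cmi μ (fun ω => (fun i => U i ω)) Y (fun ω => (S ω, W ω)) =
      F Finset.univ + G ∅ - G Finset.univ - F ∅ := by
    unfold cmi centRV
    rw [hZ, jent_eq μ U (fun ω => (S ω, W ω)) Finset.univ _ (by
        intro ω ω'; simp [funext_iff]),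
      jent_eq μ U (fun ω => (Y ω, S ω, W ω)) ∅ _ (by intro ω ω'; simp),
      jent_eq μ U (fun ω => (Y ω, S ω, W ω)) Finset.univ _ (by
        intro ω ω'; simp [funext_iff, and_assoc])]
    ring
  have hK' : (0 : ℝ) < K := by exact_mod_cast hK
  rw [hU]
  constructor
  · refine ⟨Finset.univ, ⟨⟨0, hK⟩, Finset.mem_univ _⟩, ?_⟩
    rw [hA]
    simp
  · rintro x ⟨A, hne, rfl⟩
    rw [hA]
    have ha : (0 : ℝ) < A.card := by exact_mod_cast hne.card_pos
    have c1 := jent_chord μ hμ U _ hexF A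
    have c2 := jent_chord μ hμ U _ hexG Aᶜ
    have hcc : ((Aᶜ.card : ℕ) : ℝ) = K - A.card := by
      rw [Finset.card_compl, Fintype.card_fin,
        Nat.cast_sub (by simpa using A.card_le_univ)]
    rw [hcc] at c2
    rw [one_div_mul_eq_div, one_div_mul_eq_div, div_le_div_iff₀ hK' ha]
    simp only [← hF, ← hG] at c1 c2
    linarith
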